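/- Let n ≥ 5 and let Γ be a 3-homogeneous access structure on n players satisfying monotonicity, no-cloning and no-redundancy. Suppose A₁ = {i, j, k₁} ∈ Γ_min and A₂ = {i, j, k₂} ∈ Γ_min, where i, j, k₁, k₂ are pairwise distinct. Then there exists k₃ ∈ {1,…,n} \ (A₁ ∪ A₂) such that A₃ = {k₁, k₂, k₃} ∈ Γ_min, and moreover every B ∈ Γ_min satisfies |B ∩ (A₁ ∪ A₂ ∪ A₃)| ≥ 2. -/

import Mathlib

open Finset

/-- Monotonicity of an access structure on `n` players (players = `Fin n`). -/
def Monotonic {n : ℕ} (Γ : Finset (Fin n) → Prop) : Prop :=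
  ∀ A B : Finset (Fin n), Γ A → A ⊆ B → Γ B

/-- No-cloning: a set is authorized iff its complement is not. -/
def NoCloning {n : ℕ} (Γ : Finset (Fin n) → Prop) : Prop :=
  ∀ A : Finset (Fin n), Γ A ↔ ¬ Γ Aᶜ

/-- `A` is a minimal authorized set of `Γ`. -/
def IsMinimal {n : ℕ} (Γ : Finset (Fin n) → Prop) (A : Finset (Fin n)) : Prop :=
  Γ A ∧ ∀ B : Finset (Fin n), B ⊂ A → ¬ Γ B

/-- No-redundancy: every player lies in some minimal authorized set. -/
def NoRedundancy {n : ℕ} (Γ : Finset (Fin n) → Prop) : Prop :=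
  ∀ i : Fin n, ∃ A : Finset (Fin n), IsMinimal Γ A ∧ i ∈ A

noncomputable section

/-- Combine an assignment on `A` and one on `Aᶜ` into a full bit string. -/
def glue {m : ℕ} (A : Finset (Fin m)) (u : {x // x ∈ A} → Fin 2)
    (w : {x // x ∈ Aᶜ} → Fin 2) : Fin m → Fin 2 :=
  fun x => if h : x ∈ A then u ⟨x, h⟩ else w ⟨x, Finset.mem_compl.mpr h⟩

/-- Reduced density matrix of the pure state `ψ` on the qubit positions in `A`:
the partial trace over the positions outside `A` of `ψψ†`. -/
def reducedDensity {m : ℕ} (ψ : (Fin m → Fin 2) → ℂ) (A : Finset (Fin m)) :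
    Matrix ({x // x ∈ A} → Fin 2) ({x // x ∈ A} → Fin 2) ℂ :=
  fun u v => ∑ w : {x // x ∈ Aᶜ} → Fin 2,
    ψ (glue A u w) * (starRingEnd ℂ) (ψ (glue A v w))

/-- The reduction of `ψ` to `A` is maximally mixed, i.e. equals `2^{-|A|} · I`. -/
def MaximallyMixed {m : ℕ} (ψ : (Fin m → Fin 2) → ℂ) (A : Finset (Fin m)) : Prop :=
  reducedDensity ψ A =
    ((2 : ℂ) ^ A.card)⁻¹ •
      (1 : Matrix ({x // x ∈ A} → Fin 2) ({x // x ∈ A} → Fin 2) ℂ)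

open Classical in
/-- Von Neumann entropy (natural logarithm): sum of `-λ log λ` over the eigenvalues. -/
def vnEntropy {ι : Type} [Fintype ι] [DecidableEq ι] (ρ : Matrix ι ι ℂ) : ℝ :=
  if h : ρ.IsHermitian then ∑ i, Real.negMulLog (h.eigenvalues i) else 0

/-- Entropy of the reduction of `ψ` to the set `A` of qubit positions. -/
def Sent {m : ℕ} (ψ : (Fin m → Fin 2) → ℂ) (A : Finset (Fin m)) : ℝ :=
  vnEntropy (reducedDensity ψ A)

/-- The qubit positions (in `{0,1,…,n} = Fin (n+1)`, where `0` is the reference qubit)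
of a set of players `A ⊆ Fin n`: player `i` holds position `i.succ`. -/
def posOf {n : ℕ} (A : Finset (Fin n)) : Finset (Fin (n + 1)) := A.image Fin.succ

/-- `ψ` is a pure QSS state for the access structure `Γ`: a normalized pure state of
`n+1` qubits (position `0` being the reference qubit `R`) satisfying Recoverability
`S(R) + S(A) - S(R ∪ A) = 2 log 2` for authorized `A` and Secrecy
`S(R) + S(B) - S(R ∪ B) = 0` for unauthorized `B`. -/
structure IsPureQSSState {n : ℕ} (Γ : Finset (Fin n) → Prop)
    (ψ : (Fin (n + 1) → Fin 2) → ℂ) : Prop where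
  normalized : ∑ x : Fin (n + 1) → Fin 2, ‖ψ x‖ ^ 2 = 1
  recover : ∀ A : Finset (Fin n), Γ A →
    Sent ψ {0} + Sent ψ (posOf A) - Sent ψ (insert 0 (posOf A)) = 2 * Real.log 2
  secrecy : ∀ B : Finset (Fin n), ¬ Γ B →
    Sent ψ {0} + Sent ψ (posOf B) - Sent ψ (insert 0 (posOf B)) = 0

end

/-!
Under monotonicity and no-cloning any two authorized sets intersect. Since `{i, j}` is unauthorized,
its complement is authorized and contains a minimal set `C`. As `C` avoids `i` and `j` but meets
`{i, j, k₁}` and `{i, j, k₂}`, it contains `k₁` and `k₂`. The three sets `{i, j, k₁}`, `{i, j, k₂}`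
and `C` have no common player, so a set meeting all three has at least two points in their union.
-/

theorem two_le_card_inter_union_of_inter_eq_empty {α : Type*} [DecidableEq α]
    {A₁ A₂ A₃ B : Finset α} (hempty : A₁ ∩ A₂ ∩ A₃ = ∅) (h₁ : (B ∩ A₁).Nonempty)
    (h₂ : (B ∩ A₂).Nonempty) (h₃ : (B ∩ A₃).Nonempty) : 2 ≤ #(B ∩ (A₁ ∪ A₂ ∪ A₃)) := by
  by_contra! hlt
  have heq : ∀ x ∈ B ∩ (A₁ ∪ A₂ ∪ A₃), ∀ y ∈ B ∩ (A₁ ∪ A₂ ∪ A₃), x = y :=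
    card_le_one.mp (Nat.lt_succ_iff.mp hlt)
  obtain ⟨x, hx⟩ := h₁
  obtain ⟨y, hy⟩ := h₂
  obtain ⟨z, hz⟩ := h₃
  obtain rfl : x = y := heq x (by grind) y (by grind)
  obtain rfl : x = z := heq x (by grind) z (by grind)
  exact notMem_empty x (hempty ▸ by grind)

section AccessStructure

variable {n : ℕ} {Γ : Finset (Fin n) → Prop} {A B C : Finset (Fin n)}

theorem isMinimal_iff_minimal : IsMinimal Γ A ↔ Minimal Γ A :=
  minimal_iff_forall_lt.symm

theorem exists_isMinimal_subset (hA : Γ A) : ∃ C ⊆ A, IsMinimal Γ C := by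
  simpa only [isMinimal_iff_minimal] using exists_minimal_le_of_wellFoundedLT Γ A hA

theorem le_card_of_forall_isMinimal {m : ℕ} (hle : ∀ C, IsMinimal Γ C → m ≤ #C) (hA : Γ A) :
    m ≤ #A := by
  obtain ⟨C, hCA, hC⟩ := exists_isMinimal_subset hA
  exact (hle C hC).trans (card_le_card hCA)

theorem exists_isMinimal_disjoint (hnc : NoCloning Γ) (hA : ¬ Γ A) :
    ∃ C, IsMinimal Γ C ∧ Disjoint A C := by
  obtain ⟨C, hCA, hC⟩ := exists_isMinimal_subset (not_not.mp (mt (hnc A).mpr hA))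
  exact ⟨C, hC, disjoint_left.mpr fun _ hxA hxC => mem_compl.mp (hCA hxC) hxA⟩

theorem inter_nonempty_of_authorized (hmono : Monotonic Γ) (hnc : NoCloning Γ) (hA : Γ A)
    (hB : Γ B) : (A ∩ B).Nonempty := by
  rw [← not_disjoint_iff_nonempty_inter]
  exact fun hdisj => (hnc A).mp hA (hmono B Aᶜ hB (subset_compl_iff_disjoint_left.mpr hdisj))

theorem mem_of_authorized_insert_of_disjoint (hmono : Monotonic Γ) (hnc : NoCloning Γ)
    {k : Fin n} (hA : Γ (insert k A)) (hC : Γ C) (hdisj : Disjoint A C) : k ∈ C := by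
  by_contra hk
  exact (inter_nonempty_of_authorized hmono hnc hA hC).ne_empty
    (disjoint_iff_inter_eq_empty.mp (disjoint_insert_left.mpr ⟨hk, hdisj⟩))

theorem two_le_card_inter_of_authorized_insert (hmono : Monotonic Γ) (hnc : NoCloning Γ)
    {k₁ k₂ : Fin n} (hk : k₁ ≠ k₂) (h₁ : Γ (insert k₁ A)) (h₂ : Γ (insert k₂ A)) (hC : Γ C)
    (hdisj : Disjoint A C) (hB : Γ B) :
    2 ≤ #(B ∩ (insert k₁ A ∪ insert k₂ A ∪ C)) := by
  have hmeet {D : Finset (Fin n)} (hD : Γ D) : (B ∩ D).Nonempty :=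
    inter_nonempty_of_authorized hmono hnc hB hD
  have hA : insert k₁ A ∩ insert k₂ A ⊆ A := by grind
  exact two_le_card_inter_union_of_inter_eq_empty
    (disjoint_iff_inter_eq_empty.mp (hdisj.mono_left hA)) (hmeet h₁) (hmeet h₂) (hmeet hC)

theorem stmt2_general (hmono : Monotonic Γ) (hnc : NoCloning Γ)
    (hhom : ∀ C, IsMinimal Γ C → #C = 3) {i j k₁ k₂ : Fin n} (hk : k₁ ≠ k₂)
    (h₁ : Γ {i, j, k₁}) (h₂ : Γ {i, j, k₂}) :
    ∃ k₃ ∉ ({i, j, k₁, k₂} : Finset (Fin n)), IsMinimal Γ {k₁, k₂, k₃} ∧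
      ∀ B, Γ B → 2 ≤ #(B ∩ {i, j, k₁, k₂, k₃}) := by
  have hpair : ¬ Γ {i, j} := fun h =>
    absurd (le_card_of_forall_isMinimal (fun C hC => (hhom C hC).ge) h) card_le_two.not_gt
  obtain ⟨C, hC, hdisj⟩ := exists_isMinimal_disjoint hnc hpair
  have h₁' : Γ (insert k₁ {i, j}) := by convert h₁ using 1; grind
  have h₂' : Γ (insert k₂ {i, j}) := by convert h₂ using 1; grind
  have hk₁ : k₁ ∈ C := mem_of_authorized_insert_of_disjoint hmono hnc h₁' hC.1 hdisj
  have hk₂ : k₂ ∈ C := mem_of_authorized_insert_of_disjoint hmono hnc h₂' hC.1 hdisj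
  obtain ⟨k₃, hk₃, rfl⟩ : ∃ k₃ ∉ ({k₁, k₂} : Finset (Fin n)), insert k₃ {k₁, k₂} = C :=
    exists_eq_insert_iff.mpr ⟨by grind, by rw [card_pair hk, hhom C hC]⟩
  have hC_eq : insert k₃ {k₁, k₂} = ({k₁, k₂, k₃} : Finset (Fin n)) := by grind
  refine ⟨k₃, by grind, hC_eq ▸ hC, fun B hB => ?_⟩
  convert two_le_card_inter_of_authorized_insert hmono hnc hk h₁' h₂' hC.1 hdisj hB using 3
  grind

end AccessStructure

theorem stmt2 (n : ℕ) (hn : 5 ≤ n) (Γ : Finset (Fin n) → Prop)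
    (hmono : Monotonic Γ) (hnc : NoCloning Γ) (hnr : NoRedundancy Γ)
    (hhom : ∀ A : Finset (Fin n), IsMinimal Γ A → A.card = 3)
    (i j k₁ k₂ : Fin n)
    (hij : i ≠ j) (hik₁ : i ≠ k₁) (hik₂ : i ≠ k₂)
    (hjk₁ : j ≠ k₁) (hjk₂ : j ≠ k₂) (hk₁k₂ : k₁ ≠ k₂)
    (h1 : IsMinimal Γ {i, j, k₁}) (h2 : IsMinimal Γ {i, j, k₂}) :
    ∃ k₃ : Fin n, k₃ ∉ ({i, j, k₁, k₂} : Finset (Fin n)) ∧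
      IsMinimal Γ {k₁, k₂, k₃} ∧
      ∀ B : Finset (Fin n), IsMinimal Γ B →
        2 ≤ (B ∩ ({i, j, k₁, k₂, k₃} : Finset (Fin n))).card := by
  obtain ⟨k₃, hk₃, hmin, hinter⟩ := stmt2_general hmono hnc hhom hk₁k₂ h1.1 h2.1
  exact ⟨k₃, hk₃, hmin, fun B hB => hinter B hB.1⟩
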